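/- arXiv:2603.27503 — 2 statements merged into one kernel-verified Lean document; each statement's English description precedes it below -/
import Mathlib

section
/- Let κ : ℝ → ℝ be continuous and bounded with finite nonzero limits κ₊ = lim_{x→+∞} κ(x), κ₋ = lim_{x→−∞} κ(x), with κ − κ₊ ∈ L¹([0,∞)) and κ − κ₋ ∈ L¹((−∞,0]). Let E ∈ ℝ with |E| < min(|κ₊|, |κ₋|), and let Ψ = (Ψ^A, Ψ^B) : ℝ → ℝ² be a bounded, not-identically-zero C¹ solution of the first-order system (Ψ^A)′ = κ(x)Ψ^A + EΨ^B, (Ψ^B)′ = −EΨ^A − κ(x)Ψ^B (equivalently, of the real Dirac eigenvalue equation 𝒟^r Ψ = EΨ). Set λ₊ = √(κ₊² − E²) > 0 and λ₋ = −√(κ₋² − E²) < 0, and A_± = [[κ_±, E], [−E, −κ_±]]. Then there exist nonzero vectors p₊, p₋ ∈ ℝ² with A₊ p₊ = −λ₊ p₊ and A₋ p₋ = −λ₋ p₋ such that e^{λ₊ x} Ψ(x) → p₊ as x → +∞ and e^{λ₋ x} Ψ(x) → p₋ as x → −∞. In particular Ψ decays exponentially at both ends of ℝ. -/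
noncomputable section

open Real MeasureTheory Filter

/-- A bounded-above function with `w' ≥ c w` (`c > 0`) on a half line is nonpositive there. -/
lemma growth_nonpos (w w' : ℝ → ℝ) (c X M : ℝ) (hc : 0 < c)
    (hd : ∀ x, HasDerivAt w (w' x) x) (hw : ∀ x, X ≤ x → c * w x ≤ w' x)
    (hM : ∀ x, w x ≤ M) : ∀ x, X ≤ x → w x ≤ 0 := by
  intro x hx
  by_contra hpos
  push Not at hpos
  have hdg : ∀ y, HasDerivAt (fun y => Real.exp (-c * y) * w y)
      (Real.exp (-c * y) * (w' y - c * w y)) y := by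
    intro y
    have h1 : HasDerivAt (fun y : ℝ => Real.exp (-c * y)) (Real.exp (-c * y) * (-c)) y := by
      simpa using ((hasDerivAt_id y).const_mul (-c)).exp
    refine HasDerivAt.congr_deriv (h1.mul (hd y)) ?_
    ring
  have hmono : MonotoneOn (fun y => Real.exp (-c * y) * w y) (Set.Ici X) := by
    apply monotoneOn_of_hasDerivWithinAt_nonneg (convex_Ici X)
      (f' := fun y => Real.exp (-c * y) * (w' y - c * w y))
    · exact fun y _ => (hdg y).continuousAt.continuousWithinAt
    · exact fun y _ => (hdg y).hasDerivWithinAt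
    · intro y hy
      rw [interior_Ici] at hy
      have := hw y (le_of_lt hy)
      exact mul_nonneg (Real.exp_pos _).le (by linarith)
  have hlim : Tendsto (fun y => Real.exp (-c * y) * M) atTop (nhds (0 * M)) := by
    apply Tendsto.mul_const
    apply Real.tendsto_exp_atBot.comp
    exact tendsto_id.const_mul_atTop_of_neg (by linarith)
  have hle : Real.exp (-c * x) * w x ≤ 0 * M := by
    apply ge_of_tendsto hlim
    filter_upwards [eventually_ge_atTop x] with y hy
    have h1 := hmono hx (le_trans hx hy) hy
    have h2 := mul_le_mul_of_nonneg_left (hM y) (Real.exp_pos (-c * y)).le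
    exact le_trans h1 h2
  have := mul_pos (Real.exp_pos (-c * x)) hpos
  linarith

/-- Cone condition: eventually `u² ≤ ε² v²`. -/
lemma cone (u v r : ℝ → ℝ) (l c1 c2 M ε : ℝ) (hl : 0 < l) (hε : 0 < ε)
    (hu : ∀ x, HasDerivAt u (l * u x + r x * (c1 * u x - c2 * v x)) x)
    (hv : ∀ x, HasDerivAt v (-l * v x + r x * (c2 * u x - c1 * v x)) x)
    (hr : Tendsto r atTop (nhds 0)) (hM : ∀ x, |u x| ≤ M) :
    ∃ X, ∀ x, X ≤ x → |u x| ≤ ε * |v x| := by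
  set K : ℝ := |c1| + |c2| * (1 + ε ^ 2) / (2 * ε) with hK
  have hK0 : 0 ≤ K := by positivity
  have hev : ∀ᶠ x in atTop, |r x| * K < l / 2 := by
    have h1 : Tendsto (fun x => |r x| * K) atTop (nhds (|0| * K)) := hr.abs.mul_const K
    rw [abs_zero, zero_mul] at h1
    exact h1.eventually (gt_mem_nhds (by positivity))
  obtain ⟨X, hX⟩ := eventually_atTop.1 hev
  refine ⟨X, ?_⟩
  have key := growth_nonpos (fun x => u x ^ 2 - ε ^ 2 * v x ^ 2)
    (fun x => 2 * l * (u x ^ 2 + ε ^ 2 * v x ^ 2) +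
      2 * (r x * (c1 * (u x ^ 2 + ε ^ 2 * v x ^ 2) - c2 * (1 + ε ^ 2) * (u x * v x))))
    l X (M ^ 2) hl ?_ ?_ ?_
  · intro x hx
    have h := key x hx
    have : u x ^ 2 ≤ (ε * v x) ^ 2 := by nlinarith
    have h2 := sq_le_sq.1 this
    rwa [abs_mul, abs_of_pos hε] at h2
  · intro x
    refine HasDerivAt.congr_deriv (((hu x).pow 2).sub (((hv x).pow 2).const_mul (ε ^ 2))) ?_
    simp
    ring
  · intro x hx
    have hr1 := (hX x hx).le
    set S := u x ^ 2 + ε ^ 2 * v x ^ 2 with hS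
    have hS0 : 0 ≤ S := by positivity
    have huv : |u x * v x| ≤ S / (2 * ε) := by
      rw [le_div_iff₀ (by positivity), abs_mul]
      have := sq_nonneg (|u x| - ε * |v x|)
      have e1 := sq_abs (u x)
      have e2 := sq_abs (v x)
      rw [hS, ← e1, ← e2]
      nlinarith
    have hb : |r x * (c1 * S - c2 * (1 + ε ^ 2) * (u x * v x))| ≤ l / 2 * S := by
      rw [abs_mul]
      have h1 : |c1 * S - c2 * (1 + ε ^ 2) * (u x * v x)| ≤ K * S := by
        refine (abs_sub _ _).trans ?_
        rw [abs_mul, abs_mul (c2 * (1 + ε ^ 2)), abs_mul c2, abs_of_nonneg hS0,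
          abs_of_pos (show 0 < 1 + ε ^ 2 by positivity)]
        have := mul_le_mul_of_nonneg_left huv (show 0 ≤ |c2| * (1 + ε ^ 2) by positivity)
        calc _ ≤ |c1| * S + |c2| * (1 + ε ^ 2) * (S / (2 * ε)) := by linarith
          _ = K * S := by rw [hK]; ring
      calc _ ≤ |r x| * (K * S) := mul_le_mul_of_nonneg_left h1 (abs_nonneg _)
        _ = |r x| * K * S := by ring
        _ ≤ _ := mul_le_mul_of_nonneg_right hr1 hS0
    have hb2 := (abs_le.1 hb).1
    have h3 : u x ^ 2 - ε ^ 2 * v x ^ 2 ≤ S := by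
      have : 0 ≤ ε ^ 2 * v x ^ 2 := by positivity
      linarith
    have h4 := mul_le_mul_of_nonneg_left h3 hl.le
    nlinarith
  · intro x
    have h1 : u x ^ 2 ≤ M ^ 2 := by
      rw [← sq_abs (u x)]
      exact pow_le_pow_left₀ (abs_nonneg _) (hM x) 2
    have : 0 ≤ ε ^ 2 * v x ^ 2 := by positivity
    linarith

/-- Asymptotics of the diagonalized system. -/
lemma diag_asymp (u v r : ℝ → ℝ) (l c1 c2 M : ℝ) (hl : 0 < l)
    (hu : ∀ x, HasDerivAt u (l * u x + r x * (c1 * u x - c2 * v x)) x)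
    (hv : ∀ x, HasDerivAt v (-l * v x + r x * (c2 * u x - c1 * v x)) x)
    (hr : Tendsto r atTop (nhds 0)) (hrc : Continuous r)
    (hri : IntegrableOn r (Set.Ici 0)) (hM : ∀ x, |u x| ≤ M)
    (hne : ∀ x, ¬ (u x = 0 ∧ v x = 0)) :
    ∃ L : ℝ, L ≠ 0 ∧ Tendsto (fun x => Real.exp (l * x) * u x) atTop (nhds 0) ∧
      Tendsto (fun x => Real.exp (l * x) * v x) atTop (nhds L) := by
  obtain ⟨X0, hX0⟩ := cone u v r l c1 c2 M 1 hl one_pos hu hv hr hM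
  set X := max X0 0 with hXdef
  have hX : ∀ x, X ≤ x → |u x| ≤ |v x| := fun x hx => by
    simpa using hX0 x (le_trans (le_max_left _ _) hx)
  have hv0 : ∀ x, X ≤ x → v x ≠ 0 := by
    intro x hx h0
    have := hX x hx
    rw [h0, abs_zero] at this
    exact hne x ⟨abs_nonpos_iff.1 this, h0⟩
  have hrX : IntegrableOn r (Set.Ioi X) :=
    hri.mono_set (fun x hx => le_trans (le_max_right X0 0) (le_of_lt hx))
  have huc : Continuous u := continuous_iff_continuousAt.2 fun x => (hu x).continuousAt
  have hvc : Continuous v := continuous_iff_continuousAt.2 fun x => (hv x).continuousAt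
  set y : ℝ → ℝ := fun x => Real.exp (l * x) * v x with hy
  have hyd : ∀ x, HasDerivAt y (Real.exp (l * x) * (r x * (c2 * u x - c1 * v x))) x := by
    intro x
    have h1 : HasDerivAt (fun y : ℝ => Real.exp (l * y)) (Real.exp (l * x) * l) x := by
      simpa using ((hasDerivAt_id x).const_mul l).exp
    refine HasDerivAt.congr_deriv (h1.mul (hv x)) ?_
    ring
  have hy0 : ∀ x, X ≤ x → y x ≠ 0 := fun x hx => mul_ne_zero (Real.exp_pos _).ne' (hv0 x hx)
  have hlogd : ∀ x ∈ Set.Ioi X, HasDerivAt (fun x => Real.log (y x))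
      (r x * (c2 * (u x / v x) - c1)) x := by
    intro x hx
    have h0 := hv0 x (le_of_lt hx)
    refine HasDerivAt.congr_deriv ((hyd x).log (hy0 x (le_of_lt hx))) ?_
    have := (Real.exp_pos (l * x)).ne'
    simp only [hy]
    field_simp
  have hquot : ∀ x, X ≤ x → |c2 * (u x / v x) - c1| ≤ |c2| + |c1| := by
    intro x hx
    refine (abs_sub _ _).trans ?_
    rw [abs_mul, abs_div]
    have : |u x| / |v x| ≤ 1 := div_le_one_of_le₀ (hX x hx) (abs_nonneg _)
    have := mul_le_mul_of_nonneg_left this (abs_nonneg c2)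
    linarith
  have hint1 : IntegrableOn (fun x => r x * (c2 * (u x / v x) - c1)) (Set.Ioi X) := by
    refine Integrable.mono' (hrX.abs.mul_const (|c2| + |c1|)) ?_ ?_
    · apply ContinuousOn.aestronglyMeasurable _ measurableSet_Ioi
      refine hrc.continuousOn.mul ((continuousOn_const.mul
        (huc.continuousOn.div hvc.continuousOn ?_)).sub continuousOn_const)
      exact fun x hx => hv0 x (le_of_lt hx)
    · refine (ae_restrict_iff' measurableSet_Ioi).2 (Eventually.of_forall fun x hx => ?_)
      rw [Real.norm_eq_abs, abs_mul]
      exact mul_le_mul_of_nonneg_left (hquot x (le_of_lt hx)) (abs_nonneg _)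
  have hlog := tendsto_limUnder_of_hasDerivAt_of_integrableOn_Ioi hlogd hint1
  set l0 := limUnder atTop (fun x => Real.log (y x))
  have habs : Tendsto (fun x => |y x|) atTop (nhds (Real.exp l0)) := by
    refine ((Real.continuous_exp.tendsto l0).comp hlog).congr' ?_
    filter_upwards [eventually_ge_atTop X] with x hx
    exact Real.exp_log_eq_abs (hy0 x hx)
  have hbd : ∀ᶠ x in atTop, |y x| < Real.exp l0 + 1 :=
    habs.eventually (gt_mem_nhds (by linarith))
  obtain ⟨X1, hX1⟩ := eventually_atTop.1 hbd
  set Y := max X X1 with hYdef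
  have hint2 : IntegrableOn (fun x => Real.exp (l * x) * (r x * (c2 * u x - c1 * v x)))
      (Set.Ioi Y) := by
    have hrY : IntegrableOn r (Set.Ioi Y) :=
      hrX.mono_set (Set.Ioi_subset_Ioi (le_max_left _ _))
    refine Integrable.mono' (hrY.abs.mul_const ((|c2| + |c1|) * (Real.exp l0 + 1))) ?_ ?_
    · apply Continuous.aestronglyMeasurable
      fun_prop
    · refine (ae_restrict_iff' measurableSet_Ioi).2 (Eventually.of_forall fun x hx => ?_)
      have hxX : X ≤ x := le_trans (le_max_left _ _) (le_of_lt hx)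
      have hxX1 : X1 ≤ x := le_trans (le_max_right _ _) (le_of_lt hx)
      have h0 := hv0 x hxX
      have e : Real.exp (l * x) * (r x * (c2 * u x - c1 * v x)) =
          r x * ((c2 * (u x / v x) - c1) * y x) := by
        simp only [hy]
        field_simp
      rw [e, Real.norm_eq_abs, abs_mul, abs_mul]
      refine mul_le_mul_of_nonneg_left ?_ (abs_nonneg _)
      exact mul_le_mul (hquot x hxX) (hX1 x hxX1).le (abs_nonneg _) (by positivity)
  have hylim := tendsto_limUnder_of_hasDerivAt_of_integrableOn_Ioi (fun x _ => hyd x) hint2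
  set L := limUnder atTop y
  have hL : |L| = Real.exp l0 := tendsto_nhds_unique hylim.abs habs
  have hLpos : 0 < |L| := hL ▸ Real.exp_pos l0
  refine ⟨L, abs_pos.1 hLpos, ?_, hylim⟩
  rw [Metric.tendsto_atTop]
  intro ε hε
  set η := ε / (Real.exp l0 + 1) with hη
  have hpos : 0 < Real.exp l0 + 1 := by positivity
  have hη0 : 0 < η := by positivity
  obtain ⟨X2, hX2⟩ := cone u v r l c1 c2 M η hl hη0 hu hv hr hM
  refine ⟨max X1 X2, fun x hx => ?_⟩
  have h1 := hX2 x (le_trans (le_max_right _ _) hx)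
  have h2 := hX1 x (le_trans (le_max_left _ _) hx)
  rw [Real.dist_eq, sub_zero, abs_mul, Real.abs_exp]
  have h3 : |y x| = Real.exp (l * x) * |v x| := by
    simp only [hy, abs_mul, Real.abs_exp]
  calc Real.exp (l * x) * |u x| ≤ Real.exp (l * x) * (η * |v x|) :=
        mul_le_mul_of_nonneg_left h1 (Real.exp_pos _).le
    _ = η * |y x| := by rw [h3]; ring
    _ < η * (Real.exp l0 + 1) := mul_lt_mul_of_pos_left h2 hη0
    _ = ε := by rw [hη]; field_simp

/-- One-sided result for `κp > 0`. -/
lemma one_sided_pos (κ a b : ℝ → ℝ) (κp E M : ℝ) (hκ : Continuous κ)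
    (hp : Tendsto κ atTop (nhds κp))
    (hint : IntegrableOn (fun x => κ x - κp) (Set.Ici 0)) (hpos : 0 < κp)
    (hE : |E| < |κp|)
    (ha : ∀ x, HasDerivAt a (κ x * a x + E * b x) x)
    (hb : ∀ x, HasDerivAt b (-E * a x - κ x * b x) x)
    (hMa : ∀ x, |a x| ≤ M) (hMb : ∀ x, |b x| ≤ M)
    (hne : ∀ x, ¬ (a x = 0 ∧ b x = 0)) :
    ∃ p q : ℝ, ¬ (p = 0 ∧ q = 0) ∧
      κp * p + E * q = -Real.sqrt (κp ^ 2 - E ^ 2) * p ∧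
      -E * p - κp * q = -Real.sqrt (κp ^ 2 - E ^ 2) * q ∧
      Tendsto (fun x => Real.exp (Real.sqrt (κp ^ 2 - E ^ 2) * x) * a x) atTop (nhds p) ∧
      Tendsto (fun x => Real.exp (Real.sqrt (κp ^ 2 - E ^ 2) * x) * b x) atTop (nhds q) := by
  have hsq : 0 < κp ^ 2 - E ^ 2 := by
    have := sq_lt_sq.2 hE
    linarith
  set l := Real.sqrt (κp ^ 2 - E ^ 2) with hldef
  have hl : 0 < l := Real.sqrt_pos.2 hsq
  have hl2 : l ^ 2 = κp ^ 2 - E ^ 2 := Real.sq_sqrt hsq.le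
  set s := κp + l with hs
  have hs0 : 0 < s := by positivity
  set D := s ^ 2 - E ^ 2 with hD
  have hD0 : 0 < D := by
    have : D = 2 * l ^ 2 + 2 * κp * l := by rw [hD, hs]; linarith
    rw [this]; positivity
  have hDne := hD0.ne'
  obtain ⟨L, hL, hu, hv⟩ := diag_asymp (fun x => s * a x + E * b x) (fun x => E * a x + s * b x)
    (fun x => κ x - κp) l ((s ^ 2 + E ^ 2) / D) (2 * s * E / D) (s * M + |E| * M) hl
    (by
      intro x
      refine HasDerivAt.congr_deriv (((ha x).const_mul s).add ((hb x).const_mul E)) ?_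
      have e : (s ^ 2 + E ^ 2) / D * (s * a x + E * b x) - 2 * s * E / D * (E * a x + s * b x)
          = s * a x - E * b x := by
        field_simp
        rw [hD]; ring
      rw [e, hs]
      linear_combination (-a x) * hl2)
    (by
      intro x
      refine HasDerivAt.congr_deriv (((ha x).const_mul E).add ((hb x).const_mul s)) ?_
      have e : 2 * s * E / D * (s * a x + E * b x) - (s ^ 2 + E ^ 2) / D * (E * a x + s * b x)
          = E * a x - s * b x := by
        field_simp
        rw [hD]; ring
      rw [e, hs]
      linear_combination (b x) * hl2)
    (by simpa using hp.sub_const κp) (by fun_prop) hint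
    (by
      intro x
      refine (abs_add_le _ _).trans ?_
      rw [abs_mul, abs_mul, abs_of_pos hs0]
      exact add_le_add (mul_le_mul_of_nonneg_left (hMa x) hs0.le)
        (mul_le_mul_of_nonneg_left (hMb x) (abs_nonneg _)))
    (by
      rintro x ⟨h1, h2⟩
      apply hne x
      constructor
      · have : D * a x = 0 := by rw [hD]; linear_combination s * h1 - E * h2
        exact (mul_eq_zero.1 this).resolve_left hDne
      · have : D * b x = 0 := by rw [hD]; linear_combination s * h2 - E * h1
        exact (mul_eq_zero.1 this).resolve_left hDne)
  refine ⟨-E * L / D, s * L / D, ?_, ?_, ?_, ?_, ?_⟩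
  · rintro ⟨-, h⟩
    exact (div_ne_zero (mul_ne_zero hs0.ne' hL) hDne) h
  · rw [hs]; ring
  · rw [hs]
    linear_combination (L / D) * hl2
  · have := ((hu.const_mul s).sub (hv.const_mul E)).div_const D
    convert this using 2
    · field_simp
      rw [hD]; ring
    · ring
  · have := ((hv.const_mul s).sub (hu.const_mul E)).div_const D
    convert this using 2
    · field_simp
      rw [hD]; ring
    · ring

/-- One-sided result. -/
lemma one_sided (κ a b : ℝ → ℝ) (κp E M : ℝ) (hκ : Continuous κ)
    (hp : Tendsto κ atTop (nhds κp))
    (hint : IntegrableOn (fun x => κ x - κp) (Set.Ici 0)) (hp0 : κp ≠ 0)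
    (hE : |E| < |κp|)
    (ha : ∀ x, HasDerivAt a (κ x * a x + E * b x) x)
    (hb : ∀ x, HasDerivAt b (-E * a x - κ x * b x) x)
    (hMa : ∀ x, |a x| ≤ M) (hMb : ∀ x, |b x| ≤ M)
    (hne : ∀ x, ¬ (a x = 0 ∧ b x = 0)) :
    ∃ p q : ℝ, ¬ (p = 0 ∧ q = 0) ∧
      κp * p + E * q = -Real.sqrt (κp ^ 2 - E ^ 2) * p ∧
      -E * p - κp * q = -Real.sqrt (κp ^ 2 - E ^ 2) * q ∧
      Tendsto (fun x => Real.exp (Real.sqrt (κp ^ 2 - E ^ 2) * x) * a x) atTop (nhds p) ∧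
      Tendsto (fun x => Real.exp (Real.sqrt (κp ^ 2 - E ^ 2) * x) * b x) atTop (nhds q) := by
  rcases lt_or_gt_of_ne hp0 with hneg | hpos
  · obtain ⟨q, p, h0, h1, h2, h3, h4⟩ := one_sided_pos (fun x => -κ x) b a (-κp) (-E) M hκ.neg
      hp.neg (by
        have := hint.neg
        refine this.congr (Eventually.of_forall fun x => ?_)
        simp only [Pi.neg_apply]
        ring) (by linarith) (by simpa using hE)
      (fun x => (hb x).congr_deriv (by ring)) (fun x => (ha x).congr_deriv (by ring))
      hMb hMa (fun x h => hne x h.symm)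
    rw [neg_sq, neg_sq] at *
    exact ⟨p, q, fun h => h0 h.symm, by linarith, by linarith, h4, h3⟩
  · exact one_sided_pos κ a b κp E M hκ hp hint hpos hE ha hb hMa hMb hne

/-- Uniqueness: a solution vanishing at one point vanishes everywhere. -/
lemma vanish (κ a b : ℝ → ℝ) (E B : ℝ) (hB : ∀ x, |κ x| ≤ B)
    (ha : ∀ x, HasDerivAt a (κ x * a x + E * b x) x)
    (hb : ∀ x, HasDerivAt b (-E * a x - κ x * b x) x)
    (x0 : ℝ) (h0 : a x0 = 0 ∧ b x0 = 0) (x : ℝ) : a x = 0 ∧ b x = 0 := by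
  have hn : ∀ c y, HasDerivAt (fun y => Real.exp (c * y) * (a y ^ 2 + b y ^ 2))
      (Real.exp (c * y) * (c * (a y ^ 2 + b y ^ 2) + 2 * (κ y * (a y ^ 2 - b y ^ 2)))) y := by
    intro c y
    have h1 : HasDerivAt (fun y : ℝ => Real.exp (c * y)) (Real.exp (c * y) * c) y := by
      simpa using ((hasDerivAt_id y).const_mul c).exp
    refine HasDerivAt.congr_deriv (h1.mul (((ha y).pow 2).add ((hb y).pow 2))) ?_
    simp
    ring
  have hbound : ∀ y, |κ y * (a y ^ 2 - b y ^ 2)| ≤ B * (a y ^ 2 + b y ^ 2) := by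
    intro y
    rw [abs_mul]
    refine mul_le_mul (hB y) ?_ (abs_nonneg _) ((abs_nonneg _).trans (hB y))
    rw [abs_le]
    constructor <;> nlinarith [sq_nonneg (a y), sq_nonneg (b y)]
  have hmono : Monotone (fun y => Real.exp (2 * B * y) * (a y ^ 2 + b y ^ 2)) := by
    refine monotone_of_hasDerivAt_nonneg (hn (2 * B)) fun y => ?_
    have := (abs_le.1 (hbound y)).1
    exact mul_nonneg (Real.exp_pos _).le (by linarith)
  have hanti : Antitone (fun y => Real.exp (-2 * B * y) * (a y ^ 2 + b y ^ 2)) := by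
    refine antitone_of_hasDerivAt_nonpos (hn (-2 * B)) fun y => ?_
    have := (abs_le.1 (hbound y)).2
    exact mul_nonpos_of_nonneg_of_nonpos (Real.exp_pos _).le (by linarith)
  have hle : a x ^ 2 + b x ^ 2 ≤ 0 := by
    rcases le_total x x0 with h | h
    · have := hmono h
      simp only [h0.1, h0.2] at this
      norm_num at this
      by_contra hc
      push Not at hc
      have := mul_pos (Real.exp_pos (2 * B * x)) hc
      linarith
    · have := hanti h
      simp only [h0.1, h0.2] at this
      norm_num at this
      by_contra hc
      push Not at hc
      have := mul_pos (Real.exp_pos (-(2 * B * x))) hc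
      linarith
  constructor <;> nlinarith [sq_nonneg (a x), sq_nonneg (b x)]

/-- Any bounded, not-identically-zero `C¹` solution of the real Dirac system
`(Ψ^A)′ = κΨ^A + EΨ^B`, `(Ψ^B)′ = −EΨ^A − κΨ^B` (with `κ` bounded continuous, `L¹`-converging
to nonzero limits `κ₊, κ₋` at `±∞`, and `|E| < min(|κ₊|,|κ₋|)`) decays exponentially at both
ends: with `λ₊ = √(κ₊² − E²)` and `λ₋ = −√(κ₋² − E²)`, the rescaled solutions
`e^{λ₊x}Ψ(x)` and `e^{λ₋x}Ψ(x)` converge to nonzero eigenvectors `p₊, p₋` of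
`A₊ = [[κ₊,E],[−E,−κ₊]]`, `A₋ = [[κ₋,E],[−E,−κ₋]]` for the eigenvalues `−λ₊`, `−λ₋`. -/
theorem real_dirac_exponential_asymptotics
    (κ : ℝ → ℝ) (hκcont : Continuous κ) (hκbd : ∃ B : ℝ, ∀ x, |κ x| ≤ B)
    (κp κm : ℝ)
    (hp : Tendsto κ atTop (nhds κp)) (hm : Tendsto κ atBot (nhds κm))
    (hp0 : κp ≠ 0) (hm0 : κm ≠ 0)
    (hintp : IntegrableOn (fun x => κ x - κp) (Set.Ici 0))
    (hintm : IntegrableOn (fun x => κ x - κm) (Set.Iic 0))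
    (E : ℝ) (hE : |E| < min |κp| |κm|)
    (Ψ : ℝ → ℝ × ℝ) (hΨ : ContDiff ℝ 1 Ψ)
    (hbdd : ∃ B : ℝ, ∀ x, ‖Ψ x‖ ≤ B) (hne : ∃ x, Ψ x ≠ 0)
    (hode : ∀ x : ℝ,
      deriv (fun y => (Ψ y).1) x = κ x * (Ψ x).1 + E * (Ψ x).2 ∧
      deriv (fun y => (Ψ y).2) x = -E * (Ψ x).1 - κ x * (Ψ x).2) :
    0 < Real.sqrt (κp ^ 2 - E ^ 2) ∧ 0 < Real.sqrt (κm ^ 2 - E ^ 2) ∧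
    ∃ pp pm : ℝ × ℝ, pp ≠ 0 ∧ pm ≠ 0 ∧
      (κp * pp.1 + E * pp.2 = -Real.sqrt (κp ^ 2 - E ^ 2) * pp.1 ∧
        -E * pp.1 - κp * pp.2 = -Real.sqrt (κp ^ 2 - E ^ 2) * pp.2) ∧
      (κm * pm.1 + E * pm.2 = Real.sqrt (κm ^ 2 - E ^ 2) * pm.1 ∧
        -E * pm.1 - κm * pm.2 = Real.sqrt (κm ^ 2 - E ^ 2) * pm.2) ∧
      Tendsto (fun x => Real.exp (Real.sqrt (κp ^ 2 - E ^ 2) * x) • Ψ x) atTop (nhds pp) ∧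
      Tendsto (fun x => Real.exp (-Real.sqrt (κm ^ 2 - E ^ 2) * x) • Ψ x) atBot (nhds pm) := by
  obtain ⟨B, hB⟩ := hκbd
  obtain ⟨M, hM⟩ := hbdd
  obtain ⟨xn, hxn⟩ := hne
  have hEp : |E| < |κp| := lt_of_lt_of_le hE (min_le_left _ _)
  have hEm : |E| < |κm| := lt_of_lt_of_le hE (min_le_right _ _)
  have hd : Differentiable ℝ Ψ := hΨ.differentiable (by norm_num)
  have ha : ∀ x, HasDerivAt (fun y => (Ψ y).1) (κ x * (Ψ x).1 + E * (Ψ x).2) x := by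
    intro x
    rw [← (hode x).1]
    exact (hd x).fst.hasDerivAt
  have hb : ∀ x, HasDerivAt (fun y => (Ψ y).2) (-E * (Ψ x).1 - κ x * (Ψ x).2) x := by
    intro x
    rw [← (hode x).2]
    exact (hd x).snd.hasDerivAt
  have hMa : ∀ x, |(Ψ x).1| ≤ M := fun x => (norm_fst_le (Ψ x)).trans (hM x)
  have hMb : ∀ x, |(Ψ x).2| ≤ M := fun x => (norm_snd_le (Ψ x)).trans (hM x)
  have hnz : ∀ x, ¬ ((Ψ x).1 = 0 ∧ (Ψ x).2 = 0) := by
    intro x h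
    have := vanish κ (fun y => (Ψ y).1) (fun y => (Ψ y).2) E B hB ha hb x h xn
    exact hxn (Prod.ext this.1 this.2)
  refine ⟨Real.sqrt_pos.2 (by linarith [sq_lt_sq.2 hEp]),
    Real.sqrt_pos.2 (by linarith [sq_lt_sq.2 hEm]), ?_⟩
  obtain ⟨p, q, h0, h1, h2, h3, h4⟩ := one_sided κ (fun y => (Ψ y).1) (fun y => (Ψ y).2) κp E M
    hκcont hp hintp hp0 hEp ha hb hMa hMb hnz
  obtain ⟨p', q', h0', h1', h2', h3', h4'⟩ := one_sided (fun x => -κ (-x))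
    (fun y => (Ψ (-y)).1) (fun y => (Ψ (-y)).2) (-κm) (-E) M
    (by fun_prop) ((hm.comp tendsto_neg_atTop_atBot).neg)
    (by
      rw [← neg_zero] at hintm
      refine hintm.comp_neg_Ici.neg.congr (Eventually.of_forall fun x => ?_)
      simp only [Pi.neg_apply]
      ring)
    (neg_ne_zero.2 hm0) (by simpa using hEm)
    (fun x => by
      refine HasDerivAt.congr_deriv ((ha (-x)).scomp x (hasDerivAt_neg x)) ?_
      simp; ring)
    (fun x => by
      refine HasDerivAt.congr_deriv ((hb (-x)).scomp x (hasDerivAt_neg x)) ?_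
      simp; ring)
    (fun x => hMa (-x)) (fun x => hMb (-x)) (fun x => hnz (-x))
  rw [neg_sq, neg_sq] at h1' h2' h3' h4'
  have t3 := h3'.comp tendsto_neg_atBot_atTop
  have t4 := h4'.comp tendsto_neg_atBot_atTop
  refine ⟨(p, q), (p', q'), ?_, ?_, ⟨h1, h2⟩, ⟨by linarith, by linarith⟩, ?_, ?_⟩
  · intro h
    exact h0 ⟨congrArg Prod.fst h, congrArg Prod.snd h⟩
  · intro h
    exact h0' ⟨congrArg Prod.fst h, congrArg Prod.snd h⟩
  · exact h3.prodMk_nhds h4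
  · convert t3.prodMk_nhds t4 using 2 with x
    simp [Prod.ext_iff]
end
end

section
/- Let A be a constant real 2×2 matrix with real eigenvalues λ₁ < 0 < λ₂ and corresponding nonzero eigenvectors p₁, p₂ ∈ ℝ², and let R : [0,∞) → ℝ^{2×2} be continuous with ∫₀^∞ ‖R(t)‖ dt < ∞. Then: (i) any two bounded C¹ solutions φ, ψ : [0,∞) → ℝ² of φ′(t) = (A + R(t)) φ(t) are linearly dependent over ℝ; and (ii) every bounded C¹ solution φ of this system satisfies lim_{t→∞} e^{−λ₁ t} φ(t) = c p₁ for some c ∈ ℝ. That is, the bounded solutions form a space of dimension at most one, spanned by the exponentially decaying solution with asymptotic direction p₁. -/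
noncomputable section

open Real MeasureTheory Filter

/-- A fixed matrix norm on real 2×2 matrices (sum of absolute values of the entries). -/
def matNorm (M : Matrix (Fin 2) (Fin 2) ℝ) : ℝ := ∑ i : Fin 2, ∑ j : Fin 2, |M i j|

/-- Increment estimate from a derivative bound. -/
lemma aux_incr {h h' P ρ : ℝ → ℝ} {s t C : ℝ} (hst : s ≤ t)
    (hh : ∀ r, s ≤ r → r ≤ t → HasDerivAt h (h' r) r)
    (hP : ∀ r, s ≤ r → r ≤ t → HasDerivAt P (ρ r) r)
    (hb : ∀ r, s ≤ r → r ≤ t → |h' r| ≤ C * ρ r) :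
    |h t - h s| ≤ C * (P t - P s) := by
  have := image_norm_le_of_norm_deriv_right_le_deriv_boundary' (f := fun r => h r - h s) (f' := h')
    (a := s) (b := t) (B := fun r => C * (P r - P s)) (B' := fun r => C * ρ r)
    (fun r hr => ((hh r hr.1 hr.2).continuousAt.sub continuousAt_const).continuousWithinAt)
    (fun r hr => ((hh r hr.1 hr.2.le).sub_const _).hasDerivWithinAt)
    (by simp)
    (fun r hr => (((hP r hr.1 hr.2).sub_const _).const_mul C).continuousAt.continuousWithinAt)
    (fun r hr => (((hP r hr.1 hr.2.le).sub_const _).const_mul C).hasDerivWithinAt)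
    (fun r hr => by simpa using hb r hr.1 hr.2.le)
  simpa using this (x := t) ⟨hst, le_rfl⟩

/-- Estimate of the unstable component. -/
lemma aux_unstable {y g P ρ : ℝ → ℝ} {b t C B Pinf : ℝ} (hb : 0 < b)
    (hy : ∀ s, t ≤ s → HasDerivAt y (b * y s + g s) s)
    (hP : ∀ s, t ≤ s → HasDerivAt P (ρ s) s)
    (hPlim : Tendsto P atTop (nhds Pinf))
    (hρ : ∀ s, t ≤ s → 0 ≤ ρ s) (hC : 0 ≤ C)
    (hg : ∀ s, t ≤ s → |g s| ≤ C * ρ s)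
    (hB : ∀ s, t ≤ s → |y s| ≤ B) :
    |y t| ≤ C * (Pinf - P t) := by
  have h1 : ∀ S, t ≤ S → |exp (b * (t - S)) * y S - y t| ≤ C * (P S - P t) := by
    intro S hS
    have := aux_incr (h := fun s => exp (b * (t - s)) * y s)
      (h' := fun s => exp (b * (t - s)) * g s) (P := P) (ρ := ρ) (C := C) hS
      (fun r hr _ => by
        have e : HasDerivAt (fun s => exp (b * (t - s))) (exp (b * (t - r)) * (b * (0 - 1))) r :=
          ((((hasDerivAt_const r t).sub (hasDerivAt_id r)).const_mul b)).exp
        refine (e.fun_mul (hy r hr)).congr_deriv ?_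
        ring)
      (fun r hr _ => hP r hr)
      (fun r hr _ => by
        rw [abs_mul, abs_of_pos (exp_pos _)]
        have : exp (b * (t - r)) ≤ 1 := exp_le_one_iff.mpr (by nlinarith)
        have h2 := hg r hr
        have h3 := abs_nonneg (g r)
        nlinarith)
    simpa using this
  have hlim0 : Tendsto (fun S => exp (b * (t - S))) atTop (nhds 0) := by
    apply tendsto_exp_atBot.comp
    apply Tendsto.const_mul_atBot hb
    exact tendsto_const_nhds.add_atBot tendsto_neg_atTop_atBot
  have hlim : Tendsto (fun S => exp (b * (t - S)) * y S) atTop (nhds 0) := by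
    apply squeeze_zero_norm' (a := fun S => exp (b * (t - S)) * B)
    · filter_upwards [eventually_ge_atTop t] with S hS
      rw [norm_mul, norm_eq_abs, norm_eq_abs, abs_of_pos (exp_pos _)]
      exact mul_le_mul_of_nonneg_left (hB S hS) (exp_pos _).le
    · simpa using hlim0.mul_const B
  have hl : Tendsto (fun S => |exp (b * (t - S)) * y S - y t|) atTop (nhds |0 - y t|) :=
    (hlim.sub_const _).abs
  have hr : Tendsto (fun S => C * (P S - P t)) atTop (nhds (C * (Pinf - P t))) :=
    (hPlim.sub_const _).const_mul C
  have := le_of_tendsto_of_tendsto hl hr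
    (by filter_upwards [eventually_ge_atTop t] with S hS using h1 S hS)
  simpa using this

lemma aux_decay {x y f g P ρ : ℝ → ℝ} {a b T B Pinf : ℝ} (ha : 0 < a) (hb : 0 < b)
    (hx : ∀ s, T ≤ s → HasDerivAt x (-a * x s + f s) s)
    (hy : ∀ s, T ≤ s → HasDerivAt y (b * y s + g s) s)
    (hP : ∀ s, T ≤ s → HasDerivAt P (ρ s) s)
    (hPlim : Tendsto P atTop (nhds Pinf))
    (hPT : ∀ s, T ≤ s → P T ≤ P s)
    (hPi : ∀ s, T ≤ s → P s ≤ Pinf)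
    (hρ : ∀ s, T ≤ s → 0 ≤ ρ s)
    (hsmall : Pinf - P T ≤ 1 / 4)
    (hf : ∀ s, T ≤ s → |f s| ≤ ρ s * (|x s| + |y s|))
    (hg : ∀ s, T ≤ s → |g s| ≤ ρ s * (|x s| + |y s|))
    (hB : ∀ s, T ≤ s → |x s| + |y s| ≤ B) :
    ∀ t, T ≤ t → exp (a * (t - T)) * (|x t| + |y t|) ≤ 2 * |x T| := by
  intro t₀ ht₀
  set L := exp (a * (t₀ - T)) with hL
  have hLpos : 0 < L := exp_pos _
  set w : ℝ → ℝ := fun t => min (exp (a * (t - T))) L with hw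
  have hwpos : ∀ t, 0 < w t := fun t => lt_min (exp_pos _) hLpos
  have hwmono : ∀ s t, s ≤ t → w s ≤ w t := fun s t hst =>
    min_le_min (exp_le_exp.mpr (by nlinarith)) le_rfl
  -- for s ≤ t, w t ≤ e^{a(t-s)} w s
  have hwgrow : ∀ s t, s ≤ t → w t ≤ exp (a * (t - s)) * w s := by
    intro s t hst
    have h1 : 1 ≤ exp (a * (t - s)) := one_le_exp (by nlinarith)
    have h2 : exp (a * (t - T)) = exp (a * (t - s)) * exp (a * (s - T)) := by
      rw [← exp_add]; ring_nf
    simp only [hw]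
    rw [mul_min_of_nonneg _ _ (exp_pos _).le, ← h2]
    apply min_le_min le_rfl
    nlinarith
  set n : ℝ → ℝ := fun t => |x t| + |y t| with hn
  have hn0 : ∀ t, 0 ≤ n t := fun t => by positivity
  obtain ⟨N, hN⟩ : ∃ N, IsLUB ((fun t => w t * n t) '' Set.Ici T) N := by
    apply Real.exists_isLUB
    · exact ⟨_, ⟨T, Set.self_mem_Ici, rfl⟩⟩
    · refine ⟨L * B, ?_⟩
      rintro _ ⟨t, ht, rfl⟩
      exact mul_le_mul (min_le_right _ _) (hB t ht) (hn0 t) hLpos.le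
  have hNle : ∀ t, T ≤ t → w t * n t ≤ N := fun t ht => hN.1 ⟨t, ht, rfl⟩
  have hN0 : 0 ≤ N := (mul_nonneg (hwpos T).le (hn0 T)).trans (hNle T le_rfl)
  have hnle : ∀ t, T ≤ t → n t ≤ N / w t := fun t ht => by
    rw [le_div_iff₀ (hwpos t), mul_comm]; exact hNle t ht
  have hy' : ∀ t, T ≤ t → w t * |y t| ≤ N / 4 := by
    intro t ht
    have := aux_unstable (y := y) (g := g) (P := P) (ρ := ρ) (t := t) (C := N / w t) (B := B)
      hb (fun s hs => hy s (ht.trans hs)) (fun s hs => hP s (ht.trans hs)) hPlim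
      (fun s hs => hρ s (ht.trans hs)) (div_nonneg hN0 (hwpos t).le)
      (fun s hs => by
        have h1 := hg s (ht.trans hs)
        have h2 := hnle s (ht.trans hs)
        have h3 : N / w s ≤ N / w t := div_le_div_of_nonneg_left hN0 (hwpos t) (hwmono t s hs)
        rw [mul_comm]
        exact h1.trans (mul_le_mul_of_nonneg_left (h2.trans h3) (hρ s (ht.trans hs))))
      (fun s hs => by
        have := hB s (ht.trans hs)
        have := abs_nonneg (x s)
        linarith)
    have h4 : Pinf - P t ≤ 1 / 4 := by linarith [hPT t ht]
    calc w t * |y t| ≤ w t * (N / w t * (Pinf - P t)) :=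
          mul_le_mul_of_nonneg_left this (hwpos t).le
      _ = N * (Pinf - P t) := by have := (hwpos t).ne'; field_simp
      _ ≤ N / 4 := by nlinarith
  have hx' : ∀ t, T ≤ t → w t * |x t| ≤ |x T| + N / 4 := by
    intro t ht
    have key := aux_incr (h := fun s => exp (a * (s - t)) * x s)
      (h' := fun s => exp (a * (s - t)) * f s) (P := P) (ρ := ρ) (C := N / w t) ht
      (fun r hr _ => by
        have e : HasDerivAt (fun s => exp (a * (s - t))) (exp (a * (r - t)) * (a * 1)) r :=
          ((((hasDerivAt_id r).sub_const t).const_mul a)).exp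
        refine (e.fun_mul (hx r hr)).congr_deriv ?_
        ring)
      (fun r hr _ => hP r hr)
      (fun r hr hrt => by
        rw [abs_mul, abs_of_pos (exp_pos _)]
        have h1 := hf r hr
        have h2 := hnle r hr
        have h3 := hwgrow r t hrt
        have h5 : exp (a * (r - t)) * (N / w r) ≤ N / w t := by
          rw [← mul_div_assoc, div_le_div_iff₀ (hwpos r) (hwpos t)]
          have e1 : exp (a * (r - t)) * exp (a * (t - r)) = 1 := by
            rw [← exp_add]; ring_nf; simp
          have : exp (a * (r - t)) * w t ≤ w r := by
            calc _ ≤ exp (a * (r - t)) * (exp (a * (t - r)) * w r) :=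
                  mul_le_mul_of_nonneg_left h3 (exp_pos _).le
              _ = w r := by rw [← mul_assoc, e1, one_mul]
          nlinarith
        calc exp (a * (r - t)) * |f r| ≤ exp (a * (r - t)) * (ρ r * (N / w r)) :=
              mul_le_mul_of_nonneg_left (h1.trans (mul_le_mul_of_nonneg_left h2 (hρ r hr)))
                (exp_pos _).le
          _ = ρ r * (exp (a * (r - t)) * (N / w r)) := by ring
          _ ≤ ρ r * (N / w t) := mul_le_mul_of_nonneg_left h5 (hρ r hr)
          _ = _ := mul_comm _ _)
    have h4 : P t - P T ≤ 1 / 4 := by linarith [hPi t ht]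
    simp only [sub_self, mul_zero, exp_zero, one_mul] at key
    have h6 : |x t| ≤ exp (a * (T - t)) * |x T| + N / w t * (P t - P T) := by
      have := abs_add_le (x t - exp (a * (T - t)) * x T) (exp (a * (T - t)) * x T)
      rw [abs_mul, abs_of_pos (exp_pos _)] at this
      simp only [sub_add_cancel] at this
      linarith
    have h7 : w t * exp (a * (T - t)) ≤ 1 := by
      calc w t * exp (a * (T - t)) ≤ exp (a * (t - T)) * exp (a * (T - t)) :=
            mul_le_mul_of_nonneg_right (min_le_left _ _) (exp_pos _).le
        _ = 1 := by rw [← exp_add]; ring_nf; simp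
    calc w t * |x t| ≤ w t * (exp (a * (T - t)) * |x T| + N / w t * (P t - P T)) :=
          mul_le_mul_of_nonneg_left h6 (hwpos t).le
      _ = (w t * exp (a * (T - t))) * |x T| + N * (P t - P T) := by
          have := (hwpos t).ne'; field_simp
      _ ≤ 1 * |x T| + N * (1 / 4) := add_le_add
          (mul_le_mul_of_nonneg_right h7 (abs_nonneg _)) (mul_le_mul_of_nonneg_left h4 hN0)
      _ = _ := by ring
  have hNN : N ≤ |x T| + N / 2 := by
    apply hN.2
    rintro _ ⟨t, ht, rfl⟩
    have h1 := hx' t ht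
    have h2 := hy' t ht
    simp only [hn]
    linarith
  have := hNle t₀ ht₀
  have hwt : w t₀ = L := by simp [hw, hL]
  rw [hwt] at this
  linarith

lemma aux_limit {x y f g P ρ : ℝ → ℝ} {a b T B Pinf M : ℝ} (ha : 0 < a) (hb : 0 < b)
    (hx : ∀ s, T ≤ s → HasDerivAt x (-a * x s + f s) s)
    (hy : ∀ s, T ≤ s → HasDerivAt y (b * y s + g s) s)
    (hP : ∀ s, T ≤ s → HasDerivAt P (ρ s) s)
    (hPlim : Tendsto P atTop (nhds Pinf))
    (hρi : IntegrableOn ρ (Set.Ioi T))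
    (hρ : ∀ s, T ≤ s → 0 ≤ ρ s)
    (hf : ∀ s, T ≤ s → |f s| ≤ ρ s * (|x s| + |y s|))
    (hg : ∀ s, T ≤ s → |g s| ≤ ρ s * (|x s| + |y s|))
    (hB : ∀ s, T ≤ s → |x s| + |y s| ≤ B)
    (hM0 : 0 ≤ M)
    (hM : ∀ s, T ≤ s → exp (a * s) * (|x s| + |y s|) ≤ M) :
    (∃ c, Tendsto (fun t => exp (a * t) * x t) atTop (nhds c)) ∧
      Tendsto (fun t => exp (a * t) * y t) atTop (nhds 0) := by
  constructor
  · have hd : ∀ s ∈ Set.Ioi T, HasDerivAt (fun t => exp (a * t) * x t) (exp (a * s) * f s) s := by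
      intro r hr
      have e : HasDerivAt (fun s => exp (a * s)) (exp (a * r) * (a * 1)) r :=
          ((hasDerivAt_id r).const_mul a).exp
      refine (e.fun_mul (hx r hr.le)).congr_deriv ?_
      ring
    refine ⟨_, tendsto_limUnder_of_hasDerivAt_of_integrableOn_Ioi hd ?_⟩
    have hm : AEStronglyMeasurable (fun s => exp (a * s) * f s) (volume.restrict (Set.Ioi T)) := by
      apply ((measurable_deriv (fun t => exp (a * t) * x t)).aestronglyMeasurable).congr
      filter_upwards [ae_restrict_mem measurableSet_Ioi] with s hs using (hd s hs).deriv
    apply Integrable.mono' (hρi.const_mul M) hm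
    filter_upwards [ae_restrict_mem measurableSet_Ioi] with s hs
    rw [norm_mul, norm_eq_abs, norm_eq_abs, abs_of_pos (exp_pos _)]
    have hs' : T ≤ s := le_of_lt hs
    calc exp (a * s) * |f s| ≤ exp (a * s) * (ρ s * (|x s| + |y s|)) :=
          mul_le_mul_of_nonneg_left (hf s hs') (exp_pos _).le
      _ = ρ s * (exp (a * s) * (|x s| + |y s|)) := by ring
      _ ≤ ρ s * M := mul_le_mul_of_nonneg_left (hM s hs') (hρ s hs')
      _ = _ := mul_comm _ _
  · apply squeeze_zero_norm' (a := fun t => M * (Pinf - P t))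
    · filter_upwards [eventually_ge_atTop T] with t ht
      rw [norm_mul, norm_eq_abs, norm_eq_abs, abs_of_pos (exp_pos _)]
      have := aux_unstable (y := y) (g := g) (P := P) (ρ := ρ) (t := t) (C := M * exp (-(a * t)))
        (B := B) hb (fun s hs => hy s (ht.trans hs)) (fun s hs => hP s (ht.trans hs)) hPlim
        (fun s hs => hρ s (ht.trans hs)) (mul_nonneg hM0 (exp_pos _).le)
        (fun s hs => by
          have h1 := hg s (ht.trans hs)
          have h2 := hM s (ht.trans hs)
          have h0 := hρ s (ht.trans hs)
          have h3 : exp (a * t) ≤ exp (a * s) := exp_le_exp.mpr (by nlinarith)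
          have h4 : |x s| + |y s| ≤ M * exp (-(a * t)) := by
            rw [exp_neg, ← div_eq_mul_inv, le_div_iff₀ (exp_pos _)]
            have : 0 ≤ |x s| + |y s| := by positivity
            nlinarith
          rw [mul_comm]
          exact h1.trans (mul_le_mul_of_nonneg_left h4 h0))
        (fun s hs => by
          have := hB s (ht.trans hs)
          have := abs_nonneg (x s)
          linarith)
      calc exp (a * t) * |y t| ≤ exp (a * t) * (M * exp (-(a * t)) * (Pinf - P t)) :=
            mul_le_mul_of_nonneg_left this (exp_pos _).le
        _ = (exp (a * t) * exp (-(a * t))) * (M * (Pinf - P t)) := by ring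
        _ = _ := by rw [← exp_add]; simp
    · have := (hPlim.const_sub Pinf).const_mul M
      simpa using this


lemma aux_mulVec_le (M : Matrix (Fin 2) (Fin 2) ℝ) (v : Fin 2 → ℝ) (c : ℝ)
    (hv : ∀ j, |v j| ≤ c) (i : Fin 2) : |M.mulVec v i| ≤ matNorm M * c := by
  have h0 := hv 0
  have h1 := hv 1
  have hc : 0 ≤ c := (abs_nonneg _).trans h0
  have e : M.mulVec v i = M i 0 * v 0 + M i 1 * v 1 := by
    simp [Matrix.mulVec, dotProduct, Fin.sum_univ_two]
  have hm : |M i 0| + |M i 1| ≤ matNorm M := by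
    have h00 := abs_nonneg (M 0 0)
    have h01 := abs_nonneg (M 0 1)
    have h10 := abs_nonneg (M 1 0)
    have h11 := abs_nonneg (M 1 1)
    fin_cases i <;> simp [matNorm, Fin.sum_univ_two] <;> linarith
  rw [e]
  calc |M i 0 * v 0 + M i 1 * v 1| ≤ |M i 0| * |v 0| + |M i 1| * |v 1| := by
        rw [← abs_mul, ← abs_mul]; exact abs_add_le _ _
    _ ≤ |M i 0| * c + |M i 1| * c := by gcongr
    _ = (|M i 0| + |M i 1|) * c := by ring
    _ ≤ matNorm M * c := by gcongr

lemma aux_matNorm_nonneg (M : Matrix (Fin 2) (Fin 2) ℝ) : 0 ≤ matNorm M := by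
  unfold matNorm; positivity

lemma aux_det_ne_zero (A : Matrix (Fin 2) (Fin 2) ℝ) (lam : Fin 2 → ℝ) (p : Fin 2 → Fin 2 → ℝ)
    (hlam1 : lam 0 < 0) (hlam2 : 0 < lam 1) (hp : ∀ i, p i ≠ 0)
    (heig : ∀ i, A.mulVec (p i) = lam i • p i) :
    p 0 0 * p 1 1 - p 0 1 * p 1 0 ≠ 0 := by
  intro hD
  have e : ∀ i k, A k 0 * p i 0 + A k 1 * p i 1 = lam i * p i k := by
    intro i k
    have := congrFun (heig i) k
    simpa [Matrix.mulVec, dotProduct, Fin.sum_univ_two] using this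
  have hne : lam 0 - lam 1 ≠ 0 := by linarith
  have z : ∀ k l, p 0 k * p 1 l = 0 := by
    have h00 : p 0 0 * p 1 0 = 0 := by
      apply (mul_eq_zero.mp (?_ : (lam 0 - lam 1) * (p 0 0 * p 1 0) = 0)).resolve_left hne
      linear_combination (-p 1 0) * e 0 0 + p 0 0 * e 1 0 - A 0 1 * hD
    have h11 : p 0 1 * p 1 1 = 0 := by
      apply (mul_eq_zero.mp (?_ : (lam 0 - lam 1) * (p 0 1 * p 1 1) = 0)).resolve_left hne
      linear_combination (-p 1 1) * e 0 1 + p 0 1 * e 1 1 + A 1 0 * hD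
    have h01 : p 0 0 * p 1 1 = 0 := by
      apply (mul_eq_zero.mp (?_ : (lam 0 - lam 1) * (p 0 0 * p 1 1) = 0)).resolve_left hne
      linear_combination (-p 1 1) * e 0 0 + p 0 1 * e 1 0 + (A 0 0 - lam 1) * hD
    have h10 : p 0 1 * p 1 0 = 0 := by linear_combination h01 - hD
    intro k l
    fin_cases k <;> fin_cases l <;> assumption
  obtain ⟨k, hk⟩ := Function.ne_iff.mp (hp 0)
  obtain ⟨l, hl⟩ := Function.ne_iff.mp (hp 1)
  exact mul_ne_zero hk hl (z k l)

/-- Backward uniqueness: a solution vanishing at `T` vanishes on `[0,T]`. -/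
lemma aux_backward (A : Matrix (Fin 2) (Fin 2) ℝ) (R : ℝ → Matrix (Fin 2) (Fin 2) ℝ)
    (hRcont : ∀ i j : Fin 2, ContinuousOn (fun t => R t i j) (Set.Ici 0))
    (φ : ℝ → (Fin 2 → ℝ))
    (hφ : ∀ t : ℝ, 0 ≤ t → HasDerivAt φ ((A + R t).mulVec (φ t)) t)
    (T : ℝ) (hT : φ T = 0) : ∀ t, 0 ≤ t → t ≤ T → φ t = 0 := by
  have hc : ContinuousOn (fun t => matNorm (A + R t)) (Set.Icc 0 T) := by
    unfold matNorm
    refine continuousOn_finsetSum _ fun i _ => continuousOn_finsetSum _ fun j _ => ?_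
    exact (continuousOn_const.add ((hRcont i j).mono Set.Icc_subset_Ici_self)).abs
  obtain ⟨C, hC⟩ := isCompact_Icc.exists_bound_of_continuousOn hc
  have key := ODE_solution_unique_of_mem_Icc_left (K := C.toNNReal)
    (v := fun t u => (A + R t).mulVec u) (s := fun _ => Set.univ) (f := φ) (g := fun _ => 0)
    (a := 0) (b := T)
    (fun t ht => by
      apply LipschitzWith.lipschitzOnWith
      apply LipschitzWith.of_dist_le_mul
      intro u v
      rw [dist_eq_norm, dist_eq_norm, ← Matrix.mulVec_sub]
      have h1 := hC t ⟨ht.1.le, ht.2⟩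
      have h2 : matNorm (A + R t) ≤ C.toNNReal :=
        (le_abs_self _).trans (h1.trans (Real.le_coe_toNNReal C))
      refine (pi_norm_le_iff_of_nonneg (by positivity)).mpr fun i => ?_
      refine (aux_mulVec_le _ _ ‖u - v‖ (fun j => norm_le_pi_norm (u - v) j) i).trans ?_
      gcongr)
    (fun t ht => (hφ t ht.1).continuousAt.continuousWithinAt)
    (fun t ht => (hφ t ht.1.le).hasDerivWithinAt)
    (fun _ _ => Set.mem_univ _)
    continuousOn_const
    (fun t _ => by
      simp only [Matrix.mulVec_zero]
      exact hasDerivWithinAt_const _ _ _)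
    (fun _ _ => Set.mem_univ _)
    hT
  intro t h0 h1
  exact key ⟨h0, h1⟩

/-- For a constant hyperbolic matrix `A` (eigenvalues `λ₁ < 0 < λ₂`, eigenvectors
`p₁, p₂`) and an integrable continuous perturbation `R`, the bounded solutions of
`φ′ = (A + R(t))φ` on `[0,∞)` form a space of dimension at most one, and every bounded solution
satisfies `e^{−λ₁ t} φ(t) → c p₁` for some `c ∈ ℝ`. -/
theorem bounded_solutions_of_perturbed_hyperbolic_system
    (A : Matrix (Fin 2) (Fin 2) ℝ) (lam : Fin 2 → ℝ) (p : Fin 2 → Fin 2 → ℝ)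
    (hlam1 : lam 0 < 0) (hlam2 : 0 < lam 1)
    (hp : ∀ i, p i ≠ 0)
    (heig : ∀ i, A.mulVec (p i) = lam i • p i)
    (R : ℝ → Matrix (Fin 2) (Fin 2) ℝ)
    (hRcont : ∀ i j : Fin 2, ContinuousOn (fun t => R t i j) (Set.Ici 0))
    (hRint : IntegrableOn (fun t => matNorm (R t)) (Set.Ici 0)) :
    (∀ φ ψ : ℝ → (Fin 2 → ℝ),
        (∀ t : ℝ, 0 ≤ t → HasDerivAt φ ((A + R t).mulVec (φ t)) t) →
        (∃ B : ℝ, ∀ t : ℝ, 0 ≤ t → ‖φ t‖ ≤ B) →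
        (∀ t : ℝ, 0 ≤ t → HasDerivAt ψ ((A + R t).mulVec (ψ t)) t) →
        (∃ B : ℝ, ∀ t : ℝ, 0 ≤ t → ‖ψ t‖ ≤ B) →
        ∃ c₁ c₂ : ℝ, ¬(c₁ = 0 ∧ c₂ = 0) ∧ ∀ t : ℝ, 0 ≤ t → c₁ • φ t + c₂ • ψ t = 0) ∧
    (∀ φ : ℝ → (Fin 2 → ℝ),
        (∀ t : ℝ, 0 ≤ t → HasDerivAt φ ((A + R t).mulVec (φ t)) t) →
        (∃ B : ℝ, ∀ t : ℝ, 0 ≤ t → ‖φ t‖ ≤ B) →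
        ∃ c : ℝ, Tendsto (fun t => Real.exp (-(lam 0) * t) • φ t) atTop (nhds (c • p 0))) := by
  set D := p 0 0 * p 1 1 - p 0 1 * p 1 0 with hDdef
  have hD : D ≠ 0 := aux_det_ne_zero A lam p hlam1 hlam2 hp heig
  have e : ∀ i k, A k 0 * p i 0 + A k 1 * p i 1 = lam i * p i k := by
    intro i k
    have := congrFun (heig i) k
    simpa [Matrix.mulVec, dotProduct, Fin.sum_univ_two] using this
  -- coordinates
  set l0 : (Fin 2 → ℝ) → ℝ := fun v => (p 1 1 * v 0 - p 1 0 * v 1) / D with hl0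
  set l1 : (Fin 2 → ℝ) → ℝ := fun v => (p 0 0 * v 1 - p 0 1 * v 0) / D with hl1
  have hrec : ∀ v k, v k = l0 v * p 0 k + l1 v * p 1 k := by
    intro v k
    have : v k * D = (p 1 1 * v 0 - p 1 0 * v 1) * p 0 k
        + (p 0 0 * v 1 - p 0 1 * v 0) * p 1 k := by
      fin_cases k <;> simp [hDdef] <;> ring
    simp only [hl0, hl1]
    field_simp
    linarith
  have hA : ∀ v k, A.mulVec v k = l0 v * (lam 0 * p 0 k) + l1 v * (lam 1 * p 1 k) := by
    intro v k
    have : A.mulVec v k = A k 0 * v 0 + A k 1 * v 1 := by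
      simp [Matrix.mulVec, dotProduct, Fin.sum_univ_two]
    rw [this, hrec v 0, hrec v 1, ← e 0 k, ← e 1 k]
    ring
  have hA0 : ∀ v, l0 (A.mulVec v) = lam 0 * l0 v := by
    intro v
    have : l0 (A.mulVec v) = (p 1 1 * A.mulVec v 0 - p 1 0 * A.mulVec v 1) / D := rfl
    rw [this, hA, hA, div_eq_iff hD, hDdef]
    ring
  have hA1 : ∀ v, l1 (A.mulVec v) = lam 1 * l1 v := by
    intro v
    have : l1 (A.mulVec v) = (p 0 0 * A.mulVec v 1 - p 0 1 * A.mulVec v 0) / D := rfl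
    rw [this, hA, hA, div_eq_iff hD, hDdef]
    ring
  have hadd0 : ∀ u v, l0 (u + v) = l0 u + l0 v := by
    intro u v; simp only [hl0, Pi.add_apply]; ring
  have hadd1 : ∀ u v, l1 (u + v) = l1 u + l1 v := by
    intro u v; simp only [hl1, Pi.add_apply]; ring
  -- constants
  set S : ℝ := |p 0 0| + |p 0 1| + |p 1 0| + |p 1 1| with hS
  have hS0 : 0 ≤ S := by positivity
  have hpS : ∀ i k, |p i k| ≤ S := by
    have h00 := abs_nonneg (p 0 0)
    have h01 := abs_nonneg (p 0 1)
    have h10 := abs_nonneg (p 1 0)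
    have h11 := abs_nonneg (p 1 1)
    intro i k
    fin_cases i <;> fin_cases k <;> simp [hS] <;> linarith
  have hD' : 0 < |D| := abs_pos.mpr hD
  have hl0b : ∀ v c, (∀ j, |v j| ≤ c) → |l0 v| ≤ 2 * S / |D| * c := by
    intro v c hv
    simp only [hl0]
    rw [abs_div, div_mul_eq_mul_div]
    gcongr
    calc |p 1 1 * v 0 - p 1 0 * v 1| ≤ |p 1 1| * |v 0| + |p 1 0| * |v 1| := by
          rw [← abs_mul, ← abs_mul]; exact abs_sub _ _
      _ ≤ S * c + S * c := add_le_add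
          (mul_le_mul (hpS _ _) (hv 0) (abs_nonneg _) hS0)
          (mul_le_mul (hpS _ _) (hv 1) (abs_nonneg _) hS0)
      _ = 2 * S * c := by ring
  have hl1b : ∀ v c, (∀ j, |v j| ≤ c) → |l1 v| ≤ 2 * S / |D| * c := by
    intro v c hv
    simp only [hl1]
    rw [abs_div, div_mul_eq_mul_div]
    gcongr
    calc |p 0 0 * v 1 - p 0 1 * v 0| ≤ |p 0 0| * |v 1| + |p 0 1| * |v 0| := by
          rw [← abs_mul, ← abs_mul]; exact abs_sub _ _
      _ ≤ S * c + S * c := add_le_add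
          (mul_le_mul (hpS _ _) (hv 1) (abs_nonneg _) hS0)
          (mul_le_mul (hpS _ _) (hv 0) (abs_nonneg _) hS0)
      _ = 2 * S * c := by ring
  have hvb : ∀ v k, |v k| ≤ S * (|l0 v| + |l1 v|) := by
    intro v k
    rw [hrec v k]
    calc |l0 v * p 0 k + l1 v * p 1 k| ≤ |l0 v| * |p 0 k| + |l1 v| * |p 1 k| := by
          rw [← abs_mul, ← abs_mul]; exact abs_add_le _ _
      _ ≤ |l0 v| * S + |l1 v| * S := by gcongr <;> exact hpS _ _
      _ = _ := by ring
  set K := 2 * S / |D| * S with hK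
  have hK0 : 0 ≤ K := by positivity
  set ρ : ℝ → ℝ := fun t => K * matNorm (R t) with hρdef
  have hρ0 : ∀ t, 0 ≤ ρ t := fun t => mul_nonneg hK0 (aux_matNorm_nonneg _)
  have hρint : IntegrableOn ρ (Set.Ici 0) := hRint.const_mul K
  have hρint' : IntegrableOn ρ (Set.Ioi 0) := hρint.mono_set Set.Ioi_subset_Ici_self
  have hρc : ContinuousOn ρ (Set.Ici 0) := by
    refine continuousOn_const.mul ?_
    unfold matNorm
    exact continuousOn_finsetSum _ fun i _ => continuousOn_finsetSum _ fun j _ => (hRcont i j).abs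
  set P : ℝ → ℝ := fun t => ∫ s in (0:ℝ)..t, ρ s with hPdef
  set Pinf := ∫ s in Set.Ioi (0:ℝ), ρ s with hPinf
  have hPlim : Tendsto P atTop (nhds Pinf) :=
    intervalIntegral_tendsto_integral_Ioi 0 hρint' tendsto_id
  have hPd : ∀ t, 0 < t → HasDerivAt P (ρ t) t := by
    intro t ht
    apply intervalIntegral.integral_hasDerivAt_right
    · rw [intervalIntegrable_iff_integrableOn_Ioc_of_le ht.le]
      exact hρint'.mono_set Set.Ioc_subset_Ioi_self
    · exact ContinuousOn.stronglyMeasurableAtFilter isOpen_Ioi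
        (hρc.mono Set.Ioi_subset_Ici_self) t ht
    · exact hρc.continuousAt (Ici_mem_nhds ht)
  have hPmono : ∀ s t, 0 < s → s ≤ t → P s ≤ P t := by
    intro s t hs hst
    have hm : MonotoneOn P (Set.Ioi 0) := by
      apply monotoneOn_of_deriv_nonneg (convex_Ioi 0)
      · exact fun r hr => (hPd r hr).continuousAt.continuousWithinAt
      · rw [interior_Ioi]
        exact fun r hr => (hPd r hr).differentiableAt.differentiableWithinAt
      · rw [interior_Ioi]
        intro r hr
        rw [(hPd r hr).deriv]
        exact hρ0 r
    exact hm hs (hs.trans_le hst) hst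
  have hPi : ∀ s, 0 < s → P s ≤ Pinf := by
    intro s hs
    apply ge_of_tendsto hPlim
    filter_upwards [eventually_ge_atTop s] with t ht using hPmono s t hs ht
  obtain ⟨T, hT1, hTs⟩ : ∃ T, 0 < T ∧ Pinf - P T ≤ 1 / 4 := by
    have h1 := hPlim.eventually (lt_mem_nhds (show Pinf - 1 / 4 < Pinf by linarith))
    obtain ⟨T, h2, h3⟩ := (h1.and (eventually_gt_atTop 0)).exists
    exact ⟨T, h3, by linarith⟩
  have ha : 0 < -lam 0 := by linarith
  -- the coordinate system of a solution
  have hcx : ∀ φ : ℝ → (Fin 2 → ℝ),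
      (∀ t : ℝ, 0 ≤ t → HasDerivAt φ ((A + R t).mulVec (φ t)) t) →
      ∀ s, T ≤ s → HasDerivAt (fun t => l0 (φ t))
        (-(-lam 0) * l0 (φ s) + l0 ((R s).mulVec (φ s))) s := by
    intro φ hφ s hs
    have h := hasDerivAt_pi.mp (hφ s (hT1.le.trans hs))
    have h2 := (((h 0).const_mul (p 1 1)).sub ((h 1).const_mul (p 1 0))).div_const D
    refine h2.congr_deriv ?_
    rw [neg_neg, ← hA0, ← hadd0, ← Matrix.add_mulVec]
  have hcy : ∀ φ : ℝ → (Fin 2 → ℝ),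
      (∀ t : ℝ, 0 ≤ t → HasDerivAt φ ((A + R t).mulVec (φ t)) t) →
      ∀ s, T ≤ s → HasDerivAt (fun t => l1 (φ t))
        (lam 1 * l1 (φ s) + l1 ((R s).mulVec (φ s))) s := by
    intro φ hφ s hs
    have h := hasDerivAt_pi.mp (hφ s (hT1.le.trans hs))
    have h2 := (((h 1).const_mul (p 0 0)).sub ((h 0).const_mul (p 0 1))).div_const D
    refine h2.congr_deriv ?_
    rw [← hA1, ← hadd1, ← Matrix.add_mulVec]
  have hf0 : ∀ (s : ℝ) (v : Fin 2 → ℝ),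
      |l0 ((R s).mulVec v)| ≤ ρ s * (|l0 v| + |l1 v|) := by
    intro s v
    refine (hl0b _ _ (aux_mulVec_le (R s) v _ (hvb v))).trans (le_of_eq ?_)
    simp only [hρdef, hK]; ring
  have hf1 : ∀ (s : ℝ) (v : Fin 2 → ℝ),
      |l1 ((R s).mulVec v)| ≤ ρ s * (|l0 v| + |l1 v|) := by
    intro s v
    refine (hl1b _ _ (aux_mulVec_le (R s) v _ (hvb v))).trans (le_of_eq ?_)
    simp only [hρdef, hK]; ring
  have hbd : ∀ φ : ℝ → (Fin 2 → ℝ), (∃ B : ℝ, ∀ t : ℝ, 0 ≤ t → ‖φ t‖ ≤ B) →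
      ∃ B, ∀ s, T ≤ s → |l0 (φ s)| + |l1 (φ s)| ≤ B := by
    rintro φ ⟨B, hB⟩
    refine ⟨2 * S / |D| * B + 2 * S / |D| * B, fun s hs => ?_⟩
    have h1 : ∀ j, |φ s j| ≤ B := fun j =>
      (norm_le_pi_norm (φ s) j).trans (hB s (hT1.le.trans hs))
    exact add_le_add (hl0b _ _ h1) (hl1b _ _ h1)
  have hdecay : ∀ φ : ℝ → (Fin 2 → ℝ),
      (∀ t : ℝ, 0 ≤ t → HasDerivAt φ ((A + R t).mulVec (φ t)) t) →
      (∃ B : ℝ, ∀ t : ℝ, 0 ≤ t → ‖φ t‖ ≤ B) →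
      ∀ t, T ≤ t → exp (-lam 0 * (t - T)) * (|l0 (φ t)| + |l1 (φ t)|) ≤ 2 * |l0 (φ T)| := by
    intro φ hφ hB
    obtain ⟨B, hB⟩ := hbd φ hB
    exact aux_decay (x := fun t => l0 (φ t)) (y := fun t => l1 (φ t)) ha hlam2
      (hcx φ hφ) (hcy φ hφ) (fun s hs => hPd s (hT1.trans_le hs)) hPlim
      (fun s hs => hPmono T s hT1 hs) (fun s hs => hPi s (hT1.trans_le hs))
      (fun s _ => hρ0 s) hTs (fun s _ => hf0 s _) (fun s _ => hf1 s _) hB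
  constructor
  · intro φ ψ hφ hφB hψ hψB
    obtain ⟨c₁, c₂, hc, hcomb⟩ : ∃ c₁ c₂ : ℝ, ¬(c₁ = 0 ∧ c₂ = 0) ∧
        c₁ * l0 (φ T) + c₂ * l0 (ψ T) = 0 := by
      by_cases h : l0 (φ T) = 0
      · exact ⟨1, 0, by simp, by simp [h]⟩
      · exact ⟨-l0 (ψ T), l0 (φ T), fun h' => h h'.2, by ring⟩
    refine ⟨c₁, c₂, hc, ?_⟩
    set χ : ℝ → (Fin 2 → ℝ) := fun t => c₁ • φ t + c₂ • ψ t with hχ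
    have hχd : ∀ t : ℝ, 0 ≤ t → HasDerivAt χ ((A + R t).mulVec (χ t)) t := by
      intro t ht
      refine (((hφ t ht).const_smul c₁).add ((hψ t ht).const_smul c₂)).congr_deriv ?_
      simp only [hχ, Matrix.mulVec_add, Matrix.mulVec_smul]
    have hχB : ∃ B : ℝ, ∀ t : ℝ, 0 ≤ t → ‖χ t‖ ≤ B := by
      obtain ⟨B1, h1⟩ := hφB
      obtain ⟨B2, h2⟩ := hψB
      refine ⟨|c₁| * B1 + |c₂| * B2, fun t ht => (norm_add_le _ _).trans ?_⟩
      rw [norm_smul, norm_smul, norm_eq_abs, norm_eq_abs]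
      gcongr
      · exact h1 t ht
      · exact h2 t ht
    have hχT : l0 (χ T) = 0 := by
      rw [← hcomb]
      simp only [hχ, hl0, Pi.add_apply, Pi.smul_apply, smul_eq_mul]
      ring
    have hz : ∀ t, T ≤ t → χ t = 0 := by
      intro t ht
      have h1 := hdecay χ hχd hχB t ht
      rw [hχT, abs_zero, mul_zero] at h1
      have h2 : |l0 (χ t)| + |l1 (χ t)| ≤ 0 := by
        by_contra h
        push Not at h
        have := mul_pos (exp_pos (-lam 0 * (t - T))) h
        linarith
      funext k
      have h3 := hvb (χ t) k
      have h4 : |χ t k| ≤ 0 := h3.trans (mul_nonpos_of_nonneg_of_nonpos hS0 h2)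
      exact abs_nonpos_iff.mp h4
    intro t ht
    rcases le_total T t with h | h
    · exact hz t h
    · exact aux_backward A R hRcont χ hχd T (hz T le_rfl) t ht h
  · intro φ hφ hφB
    have hdec := hdecay φ hφ hφB
    obtain ⟨B, hB⟩ := hbd φ hφB
    obtain ⟨⟨c, hc⟩, hy⟩ := aux_limit (x := fun t => l0 (φ t)) (y := fun t => l1 (φ t))
      (M := exp (-lam 0 * T) * (2 * |l0 (φ T)|)) ha hlam2
      (hcx φ hφ) (hcy φ hφ) (fun s hs => hPd s (hT1.trans_le hs)) hPlim
      (hρint'.mono_set (Set.Ioi_subset_Ioi hT1.le))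
      (fun s _ => hρ0 s) (fun s _ => hf0 s _) (fun s _ => hf1 s _) hB (by positivity)
      (fun s hs => by
        have h1 := mul_le_mul_of_nonneg_left (hdec s hs) (exp_pos (-lam 0 * T)).le
        have h2 : -lam 0 * T + -lam 0 * (s - T) = -lam 0 * s := by ring
        rwa [← mul_assoc, ← exp_add, h2] at h1)
    refine ⟨c, tendsto_pi_nhds.mpr fun k => ?_⟩
    have h := (hc.mul_const (p 0 k)).add (hy.mul_const (p 1 k))
    simp only [zero_mul, add_zero] at h
    refine h.congr fun t => ?_
    simp only [Pi.smul_apply, smul_eq_mul]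
    rw [hrec (φ t) k]
    ring
end
end
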